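/- Gronwall inequality for systems: Let G, H : [0,T] → ℝ^{n×n} be continuous with nonnegative entries, and let z, a : [0,T] → ℝ^n be continuous with z(t) ≤ a(t) + G(t) ∫_0^t H(s) z(s) ds componentwise for all t ∈ [0,T]. Let V(t,τ) solve V(t,τ) = I + ∫_τ^t H(s) G(s) V(s,τ) ds. Then z(t) ≤ a(t) + G(t) ∫_0^t V(t,s) H(s) a(s) ds componentwise for all t ∈ [0,T]. -/

import Mathlib

open Matrix

/-!
Put `w(t) = ∫₀ᵗ H z`. Since `H ≥ 0`, the hypothesis gives the linear differential inequality
`w' = H z ≤ H G w + H a`, `w(0) = 0`. The entries of `V(t, ·)` are nonnegative and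
`∂ₛ V(t, s) = -V(t, s) H(s) G(s)`, so `V(t, ·)` is an integrating factor:
`(V(t, s) w(s))' ≤ V(t, s) H(s) a(s)`, and integrating from `0` to `t` gives
`w(t) ≤ ∫₀ᵗ V(t, s) H(s) a(s) ds`. Multiplying by `G ≥ 0` finishes the proof.

The derivative in `s` comes from the derivative in `t` through `V(t, r) V(r, s) = V(t, s)`, and the
sign of `V` from Grönwall's inequality for the negative part of its columns. The integral equation
for `V` does not say that its integrand is integrable, so an unbounded `V` satisfying it through
integrals with the junk value `0` has to be ruled out first; this is a continuity argument.
-/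

section

open Set MeasureTheory Filter
open scoped Topology

section Interval

variable {E : Type*} [NormedAddCommGroup E] [NormedSpace ℝ E] {a b t : ℝ}

theorem hasDerivWithinAt_integral_Ici [CompleteSpace E] {f : ℝ → E}
    (hf : ContinuousOn f (Icc a b)) (ht : t ∈ Ico a b) :
    HasDerivWithinAt (fun u => ∫ s in a..u, f s) (f t) (Ici t) t := by
  have hft : ContinuousWithinAt f (Ioi t) t :=
    (hf t ⟨ht.1, ht.2.le⟩).mono_of_mem_nhdsWithin
      (mem_of_superset (Ioc_mem_nhdsGT ht.2) fun _ hs => ⟨ht.1.trans hs.1.le, hs.2⟩)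
  have hmeas : StronglyMeasurableAtFilter f (𝓝[>] t) volume :=
    ⟨Ioc t b, Ioc_mem_nhdsGT ht.2,
      (hf.mono fun _ hs => ⟨ht.1.trans hs.1.le, hs.2⟩).aestronglyMeasurable measurableSet_Ioc⟩
  exact intervalIntegral.integral_hasDerivWithinAt_right
    ((hf.mono (Icc_subset_Icc_right ht.2.le)).intervalIntegrable_of_Icc ht.1) hmeas hft

theorem continuousOn_integral_of_intervalIntegrable {f : ℝ → E} (hab : a ≤ b)
    (hf : IntervalIntegrable f volume a b) :
    ContinuousOn (fun t => ∫ s in a..t, f s) (Icc a b) := by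
  simpa only [uIcc_of_le hab] using
    intervalIntegral.continuousOn_primitive_interval' hf left_mem_uIcc

/- Either `f` is integrable slightly beyond `r` and the primitive is continuous there, or it is not
and the primitive takes the junk value `0` on all of `(r, ∞)`. -/
theorem eventually_intervalIntegrable_integral {r : ℝ} (f : ℝ → E) (har : a ≤ r) :
    ∀ᶠ u in 𝓝[>] r, IntervalIntegrable (fun t => ∫ s in a..t, f s) volume r u := by
  by_cases hint : ∃ v > r, IntervalIntegrable f volume a v
  · obtain ⟨v, hrv, hv⟩ := hint
    filter_upwards [Ioc_mem_nhdsGT hrv] with u hu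
    exact ((continuousOn_integral_of_intervalIntegrable (har.trans hrv.le) hv).mono
      (Icc_subset_Icc har hu.2)).intervalIntegrable_of_Icc hu.1.le
  · filter_upwards [self_mem_nhdsWithin] with u hu
    refine (intervalIntegrable_const (c := (0 : E))).congr fun v hv => ?_
    rw [uIoc_of_le (le_of_lt hu)] at hv
    exact (intervalIntegral.integral_undef fun h => hint ⟨v, hv.1, h⟩).symm

theorem le_mul_exp_of_le_add_mul_integral {m : ℝ → ℝ} {c K : ℝ}
    (hm : ContinuousOn m (Icc a b)) (hK : 0 ≤ K)
    (h : ∀ t ∈ Icc a b, m t ≤ c + K * ∫ s in a..t, m s) (ht : t ∈ Icc a b) :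
    m t ≤ c * Real.exp (K * (t - a)) := by
  have hab : a ≤ b := ht.1.trans ht.2
  have hcont : ContinuousOn (fun t => c + K * ∫ s in a..t, m s) (Icc a b) :=
    ((continuousOn_integral_of_intervalIntegrable hab
      (hm.intervalIntegrable_of_Icc hab)).const_mul K).const_add c
  have hderiv : ∀ u ∈ Ico a b,
      HasDerivWithinAt (fun t => c + K * ∫ s in a..t, m s) (K * m u) (Ici u) u :=
    fun u hu => ((hasDerivWithinAt_integral_Ici hm hu).const_mul K).const_add c
  have hbound := le_gronwallBound_of_liminf_deriv_right_le (δ := c) (K := K) (ε := 0) hcont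
    (fun u hu _ hr => (hderiv u hu).liminf_right_slope_le hr) (by simp)
    (fun u hu => by simpa using mul_le_mul_of_nonneg_left (h u ⟨hu.1, hu.2.le⟩) hK) t ht
  exact (h t ht).trans (hbound.trans_eq (gronwallBound_ε0 c K _))

end Interval

section Pi

variable {ι : Type*} [Fintype ι] {μ : Measure ℝ} {a b : ℝ} {f : ℝ → ι → ℝ}

theorem intervalIntegrable_pi_iff :
    IntervalIntegrable f μ a b ↔ ∀ i, IntervalIntegrable (fun s => f s i) μ a b := by
  simp only [IntervalIntegrable, IntegrableOn, integrable_pi_iff, forall_and]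

theorem intervalIntegral_apply (hf : IntervalIntegrable f μ a b) (i : ι) :
    (∫ s in a..b, f s ∂μ) i = ∫ s in a..b, f s i ∂μ :=
  ((ContinuousLinearMap.proj (R := ℝ) (φ := fun _ : ι => ℝ) i).intervalIntegral_comp_comm hf).symm

end Pi

section MulVec

variable {ι κ : Type*} [Fintype ι]

theorem mulVec_le_mulVec_of_nonneg {A : Matrix κ ι ℝ} (hA : ∀ i j, 0 ≤ A i j) {x y : ι → ℝ}
    (hxy : x ≤ y) : A *ᵥ x ≤ A *ᵥ y :=
  fun i => dotProduct_le_dotProduct_of_nonneg_left hxy (hA i)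

theorem continuousOn_matrix_iff {X ι κ : Type*} [TopologicalSpace X] {S : Set X}
    {A : X → Matrix κ ι ℝ} : ContinuousOn A S ↔ ∀ i j, ContinuousOn (fun t => A t i j) S :=
  continuousOn_pi.trans (forall_congr' fun _ => continuousOn_pi)

theorem continuousOn_mulVec {X : Type*} [TopologicalSpace X] {S : Set X} {A : X → Matrix κ ι ℝ}
    {x : X → ι → ℝ} (hA : ContinuousOn A S) (hx : ContinuousOn x S) :
    ContinuousOn (fun t => A t *ᵥ x t) S :=
  (continuous_fst.matrix_mulVec continuous_snd).comp_continuousOn (hA.prodMk hx)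

theorem intervalIntegrable_mulVec [Fintype κ] {A : ℝ → Matrix κ ι ℝ} {x : ℝ → ι → ℝ} {a b : ℝ}
    (hA : ContinuousOn A (uIcc a b)) (hx : IntervalIntegrable x volume a b) :
    IntervalIntegrable (fun s => A s *ᵥ x s) volume a b := by
  refine intervalIntegrable_pi_iff.2 fun i => ?_
  have := IntervalIntegrable.sum Finset.univ fun j _ =>
    (intervalIntegrable_pi_iff.1 hx j).continuousOn_mul (continuousOn_matrix_iff.1 hA i j)
  simpa only [mulVec, dotProduct, Finset.sum_fn] using this

theorem hasDerivWithinAt_mulVec [Finite κ] {A : ℝ → Matrix κ ι ℝ} {A' : Matrix κ ι ℝ}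
    {x : ℝ → ι → ℝ} {x' : ι → ℝ} {S : Set ℝ} {t : ℝ} (hA : HasDerivWithinAt A A' S t)
    (hx : HasDerivWithinAt x x' S t) :
    HasDerivWithinAt (fun s => A s *ᵥ x s) (A' *ᵥ x t + A t *ᵥ x') S t := by
  cases nonempty_fintype κ
  refine hasDerivWithinAt_pi.2 fun i => ?_
  have hsum := HasDerivWithinAt.fun_sum (u := Finset.univ) fun j _ =>
    (hasDerivWithinAt_pi.1 (hasDerivWithinAt_pi.1 hA i) j).mul (hasDerivWithinAt_pi.1 hx j)
  rw [Finset.sum_add_distrib] at hsum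
  exact hsum

open scoped Matrix.Norms.Operator in
theorem neg_mulVec_apply_le_norm_mul_norm_negPart [Fintype κ] {A : Matrix κ ι ℝ}
    (hA : ∀ i j, 0 ≤ A i j) (x : ι → ℝ) (i : κ) : -(A *ᵥ x) i ≤ ‖A‖ * ‖x⁻‖ := calc
  -(A *ᵥ x) i = (A *ᵥ -x) i := by rw [mulVec_neg, Pi.neg_apply]
  _ ≤ (A *ᵥ x⁻) i := mulVec_le_mulVec_of_nonneg hA (neg_le_negPart x) i
  _ ≤ ‖A *ᵥ x⁻‖ := (Real.le_norm_self _).trans (norm_le_pi_norm (A *ᵥ x⁻) i)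
  _ ≤ ‖A‖ * ‖x⁻‖ := linfty_opNorm_mulVec _ _

end MulVec

open scoped Matrix.Norms.Operator

/-- The function `x` solves the linear Volterra equation `x t = c + ∫ s in a..t, A s *ᵥ x s` on
`[a, b]`. The equation is imposed coordinate by coordinate and carries no integrability assumption,
so a priori some of the integrals could be the junk value `0`. -/
def IsVolterraSolution {ι : Type*} [Fintype ι] (A : ℝ → Matrix ι ι ℝ) (c : ι → ℝ)
    (x : ℝ → ι → ℝ) (a b : ℝ) : Prop :=
  ∀ t ∈ Icc a b, ∀ i, x t i = c i + ∫ s in a..t, (A s *ᵥ x s) i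

namespace IsVolterraSolution

variable {ι : Type*} [Fintype ι] {A : ℝ → Matrix ι ι ℝ} {c : ι → ℝ} {x : ℝ → ι → ℝ} {a b t K : ℝ}

theorem mono_right (hx : IsVolterraSolution A c x a b) (htb : t ≤ b) :
    IsVolterraSolution A c x a t :=
  fun s hs => hx s (Icc_subset_Icc_right htb hs)

theorem eq_add_integral (hx : IsVolterraSolution A c x a b)
    (hint : IntervalIntegrable (fun s => A s *ᵥ x s) volume a b) (ht : t ∈ Icc a b) :
    x t = c + ∫ s in a..t, A s *ᵥ x s := by
  have hint' := hint.mono_set (uIcc_subset_uIcc_left (Icc_subset_uIcc ht))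
  ext i
  rw [hx t ht i, Pi.add_apply, intervalIntegral_apply hint']

theorem continuousOn_of_intervalIntegrable (hx : IsVolterraSolution A c x a b)
    (hint : IntervalIntegrable (fun s => A s *ᵥ x s) volume a b) (hab : a ≤ b) :
    ContinuousOn x (Icc a b) :=
  ((continuousOn_integral_of_intervalIntegrable hab hint).const_add c).congr
    fun _ ht => hx.eq_add_integral hint ht

theorem norm_le_of_intervalIntegrable (hx : IsVolterraSolution A c x a b)
    (hint : IntervalIntegrable (fun s => A s *ᵥ x s) volume a b) (hab : a ≤ b)
    (hK : ∀ s ∈ Icc a b, ‖A s‖ ≤ K) : ‖x b‖ ≤ ‖c‖ * Real.exp (K * (b - a)) := by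
  have hnorm : ContinuousOn (fun s => ‖x s‖) (Icc a b) :=
    (hx.continuousOn_of_intervalIntegrable hint hab).norm
  have hK0 : 0 ≤ K := (norm_nonneg _).trans (hK a (left_mem_Icc.2 hab))
  refine le_mul_exp_of_le_add_mul_integral hnorm hK0 (fun t ht => ?_) (right_mem_Icc.2 hab)
  have hnorm_int : IntervalIntegrable (fun s => K * ‖x s‖) volume a t :=
    ((hnorm.mono (Icc_subset_Icc_right ht.2)).intervalIntegrable_of_Icc ht.1).const_mul K
  have hle : ∀ s ∈ Ioc a t, ‖A s *ᵥ x s‖ ≤ K * ‖x s‖ := fun s hs =>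
    (linfty_opNorm_mulVec _ _).trans
      (mul_le_mul_of_nonneg_right (hK s ⟨hs.1.le, hs.2.trans ht.2⟩) (norm_nonneg _))
  calc ‖x t‖ ≤ ‖c‖ + ‖∫ s in a..t, A s *ᵥ x s‖ := by
        rw [hx.eq_add_integral hint ht]; exact norm_add_le _ _
    _ ≤ ‖c‖ + ∫ s in a..t, K * ‖x s‖ := by
        gcongr
        exact intervalIntegral.norm_integral_le_of_norm_le ht.1 (ae_of_all _ hle) hnorm_int
    _ = ‖c‖ + K * ∫ s in a..t, ‖x s‖ := by rw [intervalIntegral.integral_const_mul]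

theorem intervalIntegrable_of_forall_lt (hA : ContinuousOn A (Icc a b))
    (hx : IsVolterraSolution A c x a b) (hab : a ≤ b)
    (hint : ∀ t ∈ Ico a b, IntervalIntegrable (fun s => A s *ᵥ x s) volume a t) :
    IntervalIntegrable (fun s => A s *ᵥ x s) volume a b := by
  obtain ⟨K, hK⟩ := isCompact_Icc.exists_bound_of_continuousOn hA
  have hcont : ContinuousOn x (Ico a b) := fun t ht => by
    obtain ⟨u, htu, hub⟩ := exists_between ht.2
    have hau : a ≤ u := ht.1.trans htu.le
    refine ((hx.mono_right hub.le).continuousOn_of_intervalIntegrable (hint u ⟨hau, hub⟩) hau t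
      ⟨ht.1, htu.le⟩).mono_of_mem_nhdsWithin ?_
    filter_upwards [self_mem_nhdsWithin, mem_nhdsWithin_of_mem_nhds (Iio_mem_nhds htu)]
      with s hs hsu using ⟨hs.1, le_of_lt hsu⟩
  have hbound : ∀ t ∈ Ico a b, ‖x t‖ ≤ ‖c‖ * Real.exp (K * (b - a)) := fun t ht => by
    have hK0 : 0 ≤ K := (norm_nonneg _).trans (hK a (left_mem_Icc.2 hab))
    refine ((hx.mono_right ht.2.le).norm_le_of_intervalIntegrable (hint t ht) ht.1
      fun s hs => hK s (Icc_subset_Icc_right ht.2.le hs)).trans ?_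
    gcongr
    exact ht.2.le
  refine intervalIntegrable_mulVec (by rwa [uIcc_of_le hab]) ?_
  rw [intervalIntegrable_iff_integrableOn_Ico_of_le hab]
  exact Integrable.of_bound (hcont.aestronglyMeasurable measurableSet_Ico) _
    (ae_restrict_of_forall_mem measurableSet_Ico hbound)

theorem eventually_intervalIntegrable (hA : ContinuousOn A (Icc a b))
    (hx : IsVolterraSolution A c x a b) (ht : t ∈ Ico a b) :
    ∀ᶠ u in 𝓝[>] t, IntervalIntegrable (fun s => A s *ᵥ x s) volume t u := by
  have hprim := eventually_all.2 fun i =>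
    eventually_intervalIntegrable_integral (fun s => (A s *ᵥ x s) i) ht.1
  filter_upwards [hprim, Ioc_mem_nhdsGT ht.2] with u hprim hu
  have hsub : uIcc t u ⊆ Icc a b := by
    rw [uIcc_of_le hu.1.le]
    exact Icc_subset_Icc ht.1 hu.2
  refine intervalIntegrable_mulVec (hA.mono hsub) (intervalIntegrable_pi_iff.2 fun i => ?_)
  exact ((intervalIntegrable_const (c := c i)).add (hprim i)).congr fun s hs =>
    (hx s (hsub (uIoc_subset_uIcc hs)) i).symm

/- A continuity argument: integrability on `[a, t]` extends slightly to the right of `t`, and passes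
to the limit from the left because Grönwall's inequality bounds the solution up to the limit. -/
theorem intervalIntegrable (hA : ContinuousOn A (Icc a b)) (hx : IsVolterraSolution A c x a b)
    (hab : a ≤ b) : IntervalIntegrable (fun s => A s *ᵥ x s) volume a b := by
  set J : Set ℝ := {t | IntervalIntegrable (fun s => A s *ᵥ x s) volume a t} with hJ
  have hclosed : IsClosed (J ∩ Icc a b) := by
    refine isClosed_of_closure_subset fun t ht => ?_
    have htI : t ∈ Icc a b := closure_minimal inter_subset_right isClosed_Icc ht
    refine ⟨intervalIntegrable_of_forall_lt (hA.mono (Icc_subset_Icc_right htI.2))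
      (hx.mono_right htI.2) htI.1 fun s hs => ?_, htI⟩
    obtain ⟨u, hsu, huJ, -⟩ := mem_closure_iff.1 ht (Ioi s) isOpen_Ioi hs.2
    exact IntervalIntegrable.mono_set huJ
      (uIcc_subset_uIcc_left (Icc_subset_uIcc ⟨hs.1, le_of_lt hsu⟩))
  refine hclosed.mem_of_ge_of_forall_exists_gt (by simp [hJ]) hab fun t ⟨htJ, ht⟩ => ?_
  obtain ⟨u, hu, hub⟩ :=
    ((hx.eventually_intervalIntegrable hA ht).and (Ioc_mem_nhdsGT ht.2)).exists
  exact ⟨u, IntervalIntegrable.trans htJ hu, hub⟩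

theorem continuousOn (hA : ContinuousOn A (Icc a b)) (hx : IsVolterraSolution A c x a b) :
    ContinuousOn x (Icc a b) := by
  rcases le_or_gt a b with hab | hba
  · exact hx.continuousOn_of_intervalIntegrable (hx.intervalIntegrable hA hab) hab
  · simp [Icc_eq_empty_of_lt hba]

theorem hasDerivWithinAt (hA : ContinuousOn A (Icc a b)) (hx : IsVolterraSolution A c x a b)
    (ht : t ∈ Ico a b) : HasDerivWithinAt x (A t *ᵥ x t) (Ici t) t := by
  have hint := hx.intervalIntegrable hA (ht.1.trans ht.2.le)
  have heq : ∀ u ∈ Icc a b, x u = c + ∫ s in a..u, A s *ᵥ x s :=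
    fun u hu => hx.eq_add_integral hint hu
  refine ((hasDerivWithinAt_integral_Ici (continuousOn_mulVec hA (hx.continuousOn hA))
    ht).const_add c).congr_of_eventuallyEq ?_ (heq t ⟨ht.1, ht.2.le⟩)
  filter_upwards [Icc_mem_nhdsGE ht.2] with u hu using heq u ⟨ht.1.trans hu.1, hu.2⟩

theorem nonneg (hA : ContinuousOn A (Icc a b)) (hA0 : ∀ t ∈ Icc a b, ∀ i j, 0 ≤ A t i j)
    (hc : 0 ≤ c) (hx : IsVolterraSolution A c x a b) (ht : t ∈ Icc a b) : 0 ≤ x t := by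
  obtain ⟨K, hK⟩ := isCompact_Icc.exists_bound_of_continuousOn hA
  have hK0 : 0 ≤ K := (norm_nonneg _).trans (hK t ht)
  have hcont := hx.continuousOn hA
  have hneg : ContinuousOn (fun s => ‖(x s)⁻‖) (Icc a b) :=
    (continuousOn_pi.2 fun i => (continuousOn_pi.1 hcont i).neg.sup continuousOn_const).norm
  have hAx : ∀ s ∈ Icc a b, ∀ i, -(A s *ᵥ x s) i ≤ K * ‖(x s)⁻‖ := fun s hs i =>
    (neg_mulVec_apply_le_norm_mul_norm_negPart (hA0 s hs) (x s) i).trans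
      (mul_le_mul_of_nonneg_right (hK s hs) (norm_nonneg _))
  have hle : ∀ u ∈ Icc a b, ‖(x u)⁻‖ ≤ 0 + K * ∫ s in a..u, ‖(x s)⁻‖ := fun u hu => by
    have hsub : Icc a u ⊆ Icc a b := Icc_subset_Icc_right hu.2
    have hAx_int := ((continuousOn_mulVec hA hcont).mono hsub).intervalIntegrable_of_Icc
      (μ := volume) hu.1
    have hneg_int := (hneg.mono hsub).intervalIntegrable_of_Icc (μ := volume) hu.1
    have hint0 : 0 ≤ K * ∫ s in a..u, ‖(x s)⁻‖ :=
      mul_nonneg hK0 (intervalIntegral.integral_nonneg hu.1 fun _ _ => norm_nonneg _)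
    rw [zero_add, pi_norm_le_iff_of_nonneg hint0]
    intro i
    rw [Real.norm_of_nonneg (negPart_nonneg (x u) i)]
    refine sup_le ?_ hint0
    calc -x u i ≤ -∫ s in a..u, (A s *ᵥ x s) i := by
          rw [hx u hu i]; linarith [show 0 ≤ c i from hc i]
      _ = ∫ s in a..u, -(A s *ᵥ x s) i := intervalIntegral.integral_neg.symm
      _ ≤ ∫ s in a..u, K * ‖(x s)⁻‖ := intervalIntegral.integral_mono_on hu.1
          (intervalIntegrable_pi_iff.1 hAx_int i).neg (hneg_int.const_mul K)
          fun s hs => hAx s (hsub hs) i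
      _ = K * ∫ s in a..u, ‖(x s)⁻‖ := intervalIntegral.integral_const_mul _ _
  have hzero := le_mul_exp_of_le_add_mul_integral hneg hK0 hle ht
  rwa [zero_mul, norm_le_zero_iff, negPart_eq_zero] at hzero

end IsVolterraSolution

/-- The two-parameter family `V t s`, `a ≤ s ≤ t ≤ b`, is the propagator (evolution family) of the
linear equation `x' = A x`: it starts from `V s s = 1`, and `∂ₜ V(t, s) = A(t) V(t, s)` in the sense
of right derivatives. -/
structure IsPropagator {𝔸 : Type*} [NormedRing 𝔸] [NormedAlgebra ℝ 𝔸] (A : ℝ → 𝔸)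
    (V : ℝ → ℝ → 𝔸) (a b : ℝ) : Prop where
  self : ∀ s ∈ Icc a b, V s s = 1
  continuousOn_fst : ∀ s ∈ Icc a b, ContinuousOn (fun t => V t s) (Icc s b)
  hasDerivWithinAt_fst : ∀ s ∈ Icc a b, ∀ t ∈ Ico s b,
    HasDerivWithinAt (fun u => V u s) (A t * V t s) (Ici t) t

namespace IsPropagator

variable {𝔸 : Type*} [NormedRing 𝔸] [NormedAlgebra ℝ 𝔸] {A : ℝ → 𝔸} {V : ℝ → ℝ → 𝔸}
  {a b r s t K : ℝ}

theorem norm_le (hV : IsPropagator A V a b) (hK : ∀ u ∈ Icc a b, ‖A u‖ ≤ K) (has : a ≤ s)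
    (hst : s ≤ t) (htb : t ≤ b) : ‖V t s‖ ≤ ‖(1 : 𝔸)‖ * Real.exp (K * (t - s)) := by
  have hs : s ∈ Icc a b := ⟨has, hst.trans htb⟩
  rw [← gronwallBound_ε0]
  refine norm_le_gronwallBound_of_norm_deriv_right_le (hV.continuousOn_fst s hs)
    (hV.hasDerivWithinAt_fst s hs) (by rw [hV.self s hs]) (fun u hu => ?_) t ⟨hst, htb⟩
  rw [add_zero]
  exact (norm_mul_le _ _).trans
    (mul_le_mul_of_nonneg_right (hK u ⟨has.trans hu.1, hu.2.le⟩) (norm_nonneg _))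

theorem mul (hV : IsPropagator A V a b) (hK : ∀ u ∈ Icc a b, ‖A u‖ ≤ K) (has : a ≤ s)
    (hsr : s ≤ r) (hrt : r ≤ t) (htb : t ≤ b) : V t r * V r s = V t s := by
  have hs : s ∈ Icc a b := ⟨has, hsr.trans (hrt.trans htb)⟩
  have hr : r ∈ Icc a b := ⟨has.trans hsr, hrt.trans htb⟩
  have hzero : V t r * V r s - V t s = 0 :=
    eq_zero_of_abs_deriv_le_mul_abs_self_of_eq_zero_right
      (f := fun u => V u r * V r s - V u s)
      (((hV.continuousOn_fst r hr).mul_const _).sub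
        ((hV.continuousOn_fst s hs).mono (Icc_subset_Icc_left hsr)))
      (fun u hu => ((hV.hasDerivWithinAt_fst r hr u hu).mul_const _).sub
        (hV.hasDerivWithinAt_fst s hs u ⟨hsr.trans hu.1, hu.2⟩))
      (by rw [hV.self r hr, one_mul, sub_self])
      (fun u hu => by
        rw [mul_assoc, ← mul_sub]
        exact (norm_mul_le _ _).trans
          (mul_le_mul_of_nonneg_right (hK u ⟨hr.1.trans hu.1, hu.2.le⟩) (norm_nonneg _)))
      t ⟨hrt, htb⟩
  exact sub_eq_zero.1 hzero

theorem norm_sub_one_le (hV : IsPropagator A V a b) (hK : ∀ u ∈ Icc a b, ‖A u‖ ≤ K) (has : a ≤ s)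
    (hst : s ≤ t) (htb : t ≤ b) :
    ‖V t s - 1‖ ≤ K * (‖(1 : 𝔸)‖ * Real.exp (K * (b - a))) * (t - s) := by
  have hs : s ∈ Icc a b := ⟨has, hst.trans htb⟩
  have hK0 : 0 ≤ K := (norm_nonneg _).trans (hK s hs)
  have hbound : ∀ u ∈ Ico s b,
      ‖A u * V u s‖ ≤ K * (‖(1 : 𝔸)‖ * Real.exp (K * (b - a))) := fun u hu => by
    refine (norm_mul_le _ _).trans
      (mul_le_mul (hK u ⟨has.trans hu.1, hu.2.le⟩) ?_ (norm_nonneg _) hK0)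
    refine (hV.norm_le hK has hu.1 hu.2.le).trans ?_
    gcongr
    exact hu.2.le
  simpa only [hV.self s hs] using norm_image_sub_le_of_norm_deriv_right_le_segment
    (hV.continuousOn_fst s hs) (hV.hasDerivWithinAt_fst s hs) hbound t ⟨hst, htb⟩

theorem continuousOn_snd (hV : IsPropagator A V a b) (hK : ∀ u ∈ Icc a b, ‖A u‖ ≤ K)
    (htb : t ≤ b) : ContinuousOn (V t) (Icc a t) := by
  set M := ‖(1 : 𝔸)‖ * Real.exp (K * (b - a)) with hM
  have hlip : ∀ s ∈ Icc a t, ∀ r ∈ Icc a t, s ≤ r → ‖V t r - V t s‖ ≤ M * (K * M) * (r - s) := by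
    intro s hs r hr hsr
    have hK0 : 0 ≤ K := (norm_nonneg _).trans (hK t ⟨hs.1.trans hs.2, htb⟩)
    have hbound : ‖V t r‖ ≤ M := (hV.norm_le hK hr.1 hr.2 htb).trans (by
      rw [hM]
      gcongr
      exact hr.1)
    calc ‖V t r - V t s‖ = ‖V t r * (V r s - 1)‖ := by
          rw [← hV.mul hK hs.1 hsr hr.2 htb, mul_sub, mul_one, norm_sub_rev]
      _ ≤ ‖V t r‖ * ‖V r s - 1‖ := norm_mul_le _ _
      _ ≤ M * (K * M * (r - s)) := by
          gcongr
          exact hV.norm_sub_one_le hK hs.1 hsr (hr.2.trans htb)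
      _ = M * (K * M) * (r - s) := by ring
  refine (LipschitzOnWith.of_dist_le' (K := M * (K * M)) fun s hs r hr => ?_).continuousOn
  rcases le_total s r with hsr | hrs
  · rw [dist_comm, dist_comm s, dist_eq_norm, Real.dist_eq, abs_of_nonneg (sub_nonneg.2 hsr)]
    exact hlip s hs r hr hsr
  · rw [dist_eq_norm, Real.dist_eq, abs_of_nonneg (sub_nonneg.2 hrs)]
    exact hlip r hr s hs hrs

theorem hasDerivWithinAt_snd (hV : IsPropagator A V a b) (hK : ∀ u ∈ Icc a b, ‖A u‖ ≤ K)
    (hs : s ∈ Ico a t) (htb : t ≤ b) :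
    HasDerivWithinAt (V t) (-(V t s * A s)) (Ici s) s := by
  have hsb : s < b := hs.2.trans_le htb
  have hsI : s ∈ Icc a b := ⟨hs.1, hsb.le⟩
  have hfst := (hV.hasDerivWithinAt_fst s hsI s ⟨le_rfl, hsb⟩).Ioi_of_Ici
  rw [hV.self s hsI, mul_one, hasDerivWithinAt_iff_tendsto_slope' self_notMem_Ioi] at hfst
  have hsnd : Tendsto (V t) (𝓝[>] s) (𝓝 (V t s)) :=
    (hV.continuousOn_snd hK htb s ⟨hs.1, hs.2.le⟩).mono_of_mem_nhdsWithin
      (mem_of_superset (Ioc_mem_nhdsGT hs.2) fun _ hr => ⟨hs.1.trans hr.1.le, hr.2⟩)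
  rw [← hasDerivWithinAt_Ioi_iff_Ici, hasDerivWithinAt_iff_tendsto_slope' self_notMem_Ioi]
  refine (hsnd.mul hfst).neg.congr' ?_
  filter_upwards [Ioc_mem_nhdsGT hs.2] with r hr
  rw [slope_def_module, slope_def_module, hV.self s hsI, ← hV.mul hK hs.1 hr.1.le hr.2 htb,
    mul_smul_comm, ← smul_neg, mul_sub, mul_one, neg_sub]

end IsPropagator

section Matrix

variable {κ : Type*} [Fintype κ] [DecidableEq κ] {A : ℝ → Matrix κ κ ℝ}
  {V : ℝ → ℝ → Matrix κ κ ℝ} {a b t : ℝ}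

theorem isPropagator_of_forall_isVolterraSolution_col (hA : ContinuousOn A (Icc a b))
    (hV : ∀ s ∈ Icc a b, ∀ j,
      IsVolterraSolution A ((1 : Matrix κ κ ℝ).col j) (fun t => (V t s).col j) s b) :
    IsPropagator A V a b where
  self s hs := by
    ext i j
    simpa using hV s hs j s ⟨le_rfl, hs.2⟩ i
  continuousOn_fst s hs := continuousOn_matrix_iff.2 fun i j => continuousOn_pi.1
    ((hV s hs j).continuousOn (hA.mono (Icc_subset_Icc_left hs.1))) i
  hasDerivWithinAt_fst s hs t ht := hasDerivWithinAt_pi.2 fun i => hasDerivWithinAt_pi.2 fun j =>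
    hasDerivWithinAt_pi.1
      ((hV s hs j).hasDerivWithinAt (hA.mono (Icc_subset_Icc_left hs.1)) ht) i

theorem IsPropagator.le_mulVec_add_integral (hV : IsPropagator A V a b)
    (hA : ContinuousOn A (Icc a b)) (ht : t ∈ Icc a b) (hV0 : ∀ s ∈ Icc a t, ∀ i j, 0 ≤ V t s i j)
    {x x' f : ℝ → κ → ℝ} (hx : ContinuousOn x (Icc a t))
    (hx' : ∀ s ∈ Ico a t, HasDerivWithinAt x (x' s) (Ici s) s) (hf : ContinuousOn f (Icc a t))
    (hle : ∀ s ∈ Ico a t, x' s ≤ A s *ᵥ x s + f s) :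
    x t ≤ V t a *ᵥ x a + ∫ s in a..t, V t s *ᵥ f s := by
  obtain ⟨K, hK⟩ := isCompact_Icc.exists_bound_of_continuousOn hA
  have hVt : ContinuousOn (V t) (Icc a t) := hV.continuousOn_snd hK ht.2
  have hVx : ContinuousOn (fun s => V t s *ᵥ x s) (Icc a t) := continuousOn_mulVec hVt hx
  have hVf : ContinuousOn (fun s => V t s *ᵥ f s) (Icc a t) := continuousOn_mulVec hVt hf
  have hderiv : ∀ s ∈ Ico a t, HasDerivWithinAt (fun s => V t s *ᵥ x s)
      (V t s *ᵥ (x' s - A s *ᵥ x s)) (Ici s) s := fun s hs => by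
    convert hasDerivWithinAt_mulVec (hV.hasDerivWithinAt_snd hK hs ht.2) (hx' s hs) using 1
    rw [mulVec_sub, mulVec_mulVec, neg_mulVec, sub_eq_neg_add]
  intro i
  have hint := intervalIntegral.sub_le_integral_of_hasDeriv_right_of_le ht.1
    (continuousOn_pi.1 hVx i)
    (fun s hs => (hasDerivWithinAt_pi.1 (hderiv s ⟨hs.1.le, hs.2⟩) i).mono Ioi_subset_Ici_self)
    (continuousOn_pi.1 hVf i).integrableOn_Icc
    (fun s hs => mulVec_le_mulVec_of_nonneg (hV0 s ⟨hs.1.le, hs.2.le⟩)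
      (sub_le_iff_le_add'.2 (hle s ⟨hs.1.le, hs.2⟩)) i)
  rw [hV.self t ht, one_mulVec, sub_le_iff_le_add'] at hint
  rwa [Pi.add_apply, intervalIntegral_apply (hVf.intervalIntegrable_of_Icc ht.1)]

theorem IsPropagator.integral_le_integral_mulVec (hV : IsPropagator A V a b)
    (hA : ContinuousOn A (Icc a b)) (ht : t ∈ Icc a b) (hV0 : ∀ s ∈ Icc a t, ∀ i j, 0 ≤ V t s i j)
    {y f : ℝ → κ → ℝ} (hy : ContinuousOn y (Icc a t)) (hf : ContinuousOn f (Icc a t))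
    (hle : ∀ s ∈ Ico a t, y s ≤ A s *ᵥ (∫ u in a..s, y u) + f s) :
    (∫ s in a..t, y s) ≤ ∫ s in a..t, V t s *ᵥ f s := by
  have hprim : ContinuousOn (fun s => ∫ u in a..s, y u) (Icc a t) :=
    continuousOn_integral_of_intervalIntegrable ht.1 (hy.intervalIntegrable_of_Icc ht.1)
  simpa only [intervalIntegral.integral_same, mulVec_zero, zero_add] using
    hV.le_mulVec_add_integral hA ht hV0 hprim (fun s hs => hasDerivWithinAt_integral_Ici hy hs)
      hf hle

end Matrix

end

theorem gronwall_for_systems_general {ι κ : Type*} [Fintype ι] [Fintype κ] [DecidableEq κ]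
    {t₀ t₁ : ℝ} {G : ℝ → Matrix ι κ ℝ} {H : ℝ → Matrix κ ι ℝ} {z a : ℝ → ι → ℝ}
    {V : ℝ → ℝ → Matrix κ κ ℝ}
    (hG : ContinuousOn G (Set.Icc t₀ t₁)) (hH : ContinuousOn H (Set.Icc t₀ t₁))
    (hG0 : ∀ t ∈ Set.Icc t₀ t₁, ∀ i j, 0 ≤ G t i j)
    (hH0 : ∀ t ∈ Set.Icc t₀ t₁, ∀ i j, 0 ≤ H t i j)
    (hz : ContinuousOn z (Set.Icc t₀ t₁)) (ha : ContinuousOn a (Set.Icc t₀ t₁))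
    (hle : ∀ t ∈ Set.Icc t₀ t₁, z t ≤ a t + G t *ᵥ ∫ s in t₀..t, H s *ᵥ z s)
    (hV : ∀ τ ∈ Set.Icc t₀ t₁, ∀ t ∈ Set.Icc τ t₁, ∀ i j,
      V t τ i j = (1 : Matrix κ κ ℝ) i j + ∫ s in τ..t, (H s * G s * V s τ) i j)
    {t : ℝ} (ht : t ∈ Set.Icc t₀ t₁) :
    z t ≤ a t + G t *ᵥ ∫ s in t₀..t, V t s *ᵥ (H s *ᵥ a s) := by
  have hA : ContinuousOn (fun s => H s * G s) (Set.Icc t₀ t₁) :=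
    (continuous_fst.matrix_mul continuous_snd).comp_continuousOn (hH.prodMk hG)
  have hA0 : ∀ s ∈ Set.Icc t₀ t₁, ∀ i j, 0 ≤ (H s * G s) i j := fun s hs i j =>
    Finset.sum_nonneg fun k _ => mul_nonneg (hH0 s hs i k) (hG0 s hs k j)
  have hcol : ∀ τ ∈ Set.Icc t₀ t₁, ∀ j, IsVolterraSolution (fun s => H s * G s)
      ((1 : Matrix κ κ ℝ).col j) (fun t => (V t τ).col j) τ t₁ :=
    fun τ hτ j t ht i => hV τ hτ t ht i j
  have hV0 : ∀ s ∈ Set.Icc t₀ t, ∀ i j, 0 ≤ V t s i j := fun s hs i j =>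
    have hsub : Set.Icc s t₁ ⊆ Set.Icc t₀ t₁ := Set.Icc_subset_Icc_left hs.1
    (hcol s ⟨hs.1, hs.2.trans ht.2⟩ j).nonneg (hA.mono hsub) (fun u hu => hA0 u (hsub hu))
      (fun k => zero_le_one_elem k j) ⟨hs.2, ht.2⟩ i
  have hsub : Set.Icc t₀ t ⊆ Set.Icc t₀ t₁ := Set.Icc_subset_Icc_right ht.2
  have hHz : ∀ s ∈ Set.Ico t₀ t,
      H s *ᵥ z s ≤ (H s * G s) *ᵥ (∫ u in t₀..s, H u *ᵥ z u) + H s *ᵥ a s := fun s hs => by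
    have hs' := hsub ⟨hs.1, hs.2.le⟩
    rw [← mulVec_mulVec, ← mulVec_add, add_comm]
    exact mulVec_le_mulVec_of_nonneg (hH0 s hs') (hle s hs')
  have hint : (∫ s in t₀..t, H s *ᵥ z s) ≤ ∫ s in t₀..t, V t s *ᵥ (H s *ᵥ a s) :=
    (isPropagator_of_forall_isVolterraSolution_col hA hcol).integral_le_integral_mulVec hA ht hV0
      ((continuousOn_mulVec hH hz).mono hsub) ((continuousOn_mulVec hH ha).mono hsub) hHz
  exact (hle t ht).trans (add_le_add_right (mulVec_le_mulVec_of_nonneg (hG0 t ht) hint) _)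

/-- Gronwall inequality for systems (Chandra–Davis): if z(t) ≤ a(t) + G(t) ∫₀ᵗ H(s) z(s) ds
    componentwise, with G, H continuous nonnegative matrices and V solving
    V(t,τ) = I + ∫_τ^t H(s) G(s) V(s,τ) ds, then
    z(t) ≤ a(t) + G(t) ∫₀ᵗ V(t,s) H(s) a(s) ds componentwise. -/
theorem gronwall_for_systems (n : ℕ) (T : ℝ) (hT : 0 < T)
    (G H : ℝ → Matrix (Fin n) (Fin n) ℝ)
    (z a : ℝ → Fin n → ℝ)
    (hGcont : ∀ i j, ContinuousOn (fun t => G t i j) (Set.Icc 0 T))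
    (hHcont : ∀ i j, ContinuousOn (fun t => H t i j) (Set.Icc 0 T))
    (hGnonneg : ∀ t ∈ Set.Icc (0:ℝ) T, ∀ i j, 0 ≤ G t i j)
    (hHnonneg : ∀ t ∈ Set.Icc (0:ℝ) T, ∀ i j, 0 ≤ H t i j)
    (hzcont : ContinuousOn z (Set.Icc 0 T))
    (hacont : ContinuousOn a (Set.Icc 0 T))
    (hz : ∀ t ∈ Set.Icc (0:ℝ) T, ∀ i,
      z t i ≤ a t i + (G t *ᵥ (∫ s in (0:ℝ)..t, H s *ᵥ z s)) i)
    (V : ℝ → ℝ → Matrix (Fin n) (Fin n) ℝ)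
    (hV : ∀ t ∈ Set.Icc (0:ℝ) T, ∀ τ ∈ Set.Icc (0:ℝ) T, ∀ i j,
      V t τ i j = (1 : Matrix (Fin n) (Fin n) ℝ) i j
        + ∫ s in τ..t, (H s * G s * V s τ) i j) :
    ∀ t ∈ Set.Icc (0:ℝ) T, ∀ i,
      z t i ≤ a t i + (G t *ᵥ (∫ s in (0:ℝ)..t, V t s *ᵥ (H s *ᵥ a s))) i := by
  exact fun t ht => gronwall_for_systems_general (continuousOn_matrix_iff.2 hGcont)
    (continuousOn_matrix_iff.2 hHcont) hGnonneg hHnonneg hzcont hacont hz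
    (fun τ hτ t ht => hV t ⟨hτ.1.trans ht.1, ht.2⟩ τ hτ) ht
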